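/- Let F : ℝ^d → ℝ be differentiable with L-Lipschitz continuous gradient (L > 0), let h : ℝ^d → ℝ ∪ {+∞} be proper, lower semicontinuous and convex, let γ > 0, and let x ∈ ℝ^d with h(x) < +∞ and g ∈ ℝ^d. Set x⁺ = prox_{γh}(x − γg). Then F(x⁺) + h(x⁺) ≤ F(x) + h(x) + (γ/2)·‖g − ∇F(x)‖² + (Lγ²/2 − γ/2)·‖𝒢_{γh}(x, g)‖². -/

import Mathlib

/-!
Write `y = prox (x - γ • g)`. Two inequalities carry the proof. The descent lemma for a function with
`L`-Lipschitz gradient (`descent`) gives `F y ≤ F x + ⟪∇F x, y - x⟫ + L / 2 * ‖y - x‖ ^ 2`.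
Comparing the prox objective at its minimizer `y` with its values on the segment from `y` to `x`,
and letting the point tend to `y`, gives the variational inequality
`h y - h x ≤ ⟪y - (x - γ • g), x - y⟫ / γ` (`prox_variational`).
In the sum of the two, the cross term `⟪∇F x - g, y - x⟫` is at most
`γ / 2 * ‖g - ∇F x‖ ^ 2 + ‖y - x‖ ^ 2 / (2 * γ)` by Young's inequality, and
`‖y - x‖ = γ * ‖γ⁻¹ • (x - y)‖`.
-/

open MeasureTheory
open scoped RealInnerProductSpace

noncomputable section

/-- Descent lemma: a function with `L`-Lipschitz gradient lies below its quadratic upper model. -/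
theorem descent {E : Type*} [NormedAddCommGroup E] [InnerProductSpace ℝ E] [CompleteSpace E]
    (F : E → ℝ) (L : ℝ) (hFdiff : Differentiable ℝ F)
    (hFgrad : ∀ p q : E, ‖gradient F p - gradient F q‖ ≤ L * ‖p - q‖) (x v : E) :
    F (x + v) ≤ F x + ⟪gradient F x, v⟫ + L / 2 * ‖v‖ ^ 2 := by
  -- The gap between `F` and the model along the segment is nonincreasing.
  let ψ : ℝ → ℝ := fun t => F (x + t • v) - t * ⟪gradient F x, v⟫ - t ^ 2 * (L / 2 * ‖v‖ ^ 2)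
  have hψ : ∀ t : ℝ, HasDerivAt ψ
      (⟪gradient F (x + t • v), v⟫ - ⟪gradient F x, v⟫ - 2 * t * (L / 2 * ‖v‖ ^ 2)) t := by
    intro t
    have hl : HasDerivAt (fun s : ℝ => x + s • v) v t := by
      simpa using ((hasDerivAt_id t).smul_const v).const_add x
    have hF := (hFdiff (x + t • v)).hasGradientAt.hasFDerivAt.comp_hasDerivAt t hl
    rw [InnerProductSpace.toDual_apply_apply] at hF
    have h1 : HasDerivAt (fun s : ℝ => s * ⟪gradient F x, v⟫) ⟪gradient F x, v⟫ t := by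
      simpa using (hasDerivAt_id t).mul_const ⟪gradient F x, v⟫
    have h2 : HasDerivAt (fun s : ℝ => s ^ 2 * (L / 2 * ‖v‖ ^ 2))
        (2 * t * (L / 2 * ‖v‖ ^ 2)) t := by
      simpa using (hasDerivAt_pow 2 t).mul_const (L / 2 * ‖v‖ ^ 2)
    exact (hF.sub h1).sub h2
  have hanti : AntitoneOn ψ (Set.Icc 0 1) := by
    refine antitoneOn_of_deriv_nonpos (convex_Icc 0 1)
      (fun t _ => (hψ t).continuousAt.continuousWithinAt)
      (fun t _ => (hψ t).differentiableAt.differentiableWithinAt) ?_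
    intro t ht
    rw [interior_Icc] at ht
    rw [(hψ t).deriv, ← inner_sub_left]
    have h1 := real_inner_le_norm (gradient F (x + t • v) - gradient F x) v
    have h2 := hFgrad (x + t • v) x
    rw [add_sub_cancel_left, norm_smul, Real.norm_of_nonneg ht.1.le] at h2
    have h3 := mul_le_mul_of_nonneg_right h2 (norm_nonneg v)
    linarith
  have h01 := hanti (Set.left_mem_Icc.2 zero_le_one) (Set.right_mem_Icc.2 zero_le_one) zero_le_one
  simp only [ψ, one_smul, zero_smul, add_zero] at h01
  linarith

/-- First-order optimality of `y = prox_{γh}(z)`, tested against a point `x` of the domain of `h`.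
The values of `h` at `x` and `y` are given as the reals `a` and `b`. -/
theorem prox_variational {E : Type*} [NormedAddCommGroup E] [InnerProductSpace ℝ E]
    (h : E → EReal)
    (hconv : ∀ p q : E, ∀ a b : ℝ, 0 ≤ a → 0 ≤ b → a + b = 1 →
      h (a • p + b • q) ≤ (a : EReal) * h p + (b : EReal) * h q)
    (γ : ℝ) (hγ : 0 < γ) (x y z : E)
    (hmin : IsMinOn (fun w => h w + ((‖w - z‖ ^ 2 / (2 * γ) : ℝ) : EReal)) Set.univ y)
    (a b : ℝ) (ha : h x = a) (hb : h y = b) :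
    b - a ≤ ⟪y - z, x - y⟫ / γ := by
  have key : ∀ t : ℝ, 0 < t → t ≤ 1 →
      b - a ≤ ⟪y - z, x - y⟫ / γ + t * (‖x - y‖ ^ 2 / (2 * γ)) := by
    intro t ht ht1
    have h1 : h y + ((‖y - z‖ ^ 2 / (2 * γ) : ℝ) : EReal) ≤
        h ((1 - t) • y + t • x)
          + ((‖((1 - t) • y + t • x) - z‖ ^ 2 / (2 * γ) : ℝ) : EReal) :=
      hmin (Set.mem_univ _)
    have h2 := h1.trans (add_le_add_left
      (hconv y x (1 - t) t (by linarith) ht.le (by ring)) _)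
    rw [ha, hb] at h2
    norm_cast at h2
    have e : (1 - t) • y + t • x - z = (y - z) + t • (x - y) := by module
    rw [e, norm_add_sq_real, inner_smul_right, norm_smul, mul_pow, Real.norm_eq_abs, sq_abs] at h2
    have e2 : (‖y - z‖ ^ 2 + 2 * (t * ⟪y - z, x - y⟫) + t ^ 2 * ‖x - y‖ ^ 2) / (2 * γ)
        = ‖y - z‖ ^ 2 / (2 * γ)
          + t * (⟪y - z, x - y⟫ / γ + t * (‖x - y‖ ^ 2 / (2 * γ))) := by
      field_simp
      ring
    rw [e2] at h2
    refine le_of_mul_le_mul_left ?_ ht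
    linarith
  have hlim : Filter.Tendsto
      (fun t : ℝ => ⟪y - z, x - y⟫ / γ + t * (‖x - y‖ ^ 2 / (2 * γ)))
      (nhdsWithin 0 (Set.Ioi 0)) (nhds (⟪y - z, x - y⟫ / γ)) := by
    have hc : Continuous
        (fun t : ℝ => ⟪y - z, x - y⟫ / γ + t * (‖x - y‖ ^ 2 / (2 * γ))) := by fun_prop
    simpa using (hc.tendsto 0).mono_left nhdsWithin_le_nhds
  refine ge_of_tendsto hlim ?_
  filter_upwards [Ioc_mem_nhdsGT (zero_lt_one' ℝ)] with t ht using key t ht.1 ht.2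

theorem stmt14 {d : ℕ}
    (F : EuclideanSpace ℝ (Fin d) → ℝ) (L : ℝ) (hL : 0 < L)
    (hFdiff : Differentiable ℝ F)
    (hFgrad : ∀ p q : EuclideanSpace ℝ (Fin d), ‖gradient F p - gradient F q‖ ≤ L * ‖p - q‖)
    (h : EuclideanSpace ℝ (Fin d) → EReal)
    (hbot : ∀ z, h z ≠ ⊥)
    (hlsc : LowerSemicontinuous h)
    (hconv : ∀ p q : EuclideanSpace ℝ (Fin d), ∀ a b : ℝ, 0 ≤ a → 0 ≤ b → a + b = 1 →
      h (a • p + b • q) ≤ (a : EReal) * h p + (b : EReal) * h q)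
    (hproper : ∃ z, h z ≠ ⊤)
    (γ : ℝ) (hγ : 0 < γ)
    (x : EuclideanSpace ℝ (Fin d)) (hx : h x ≠ ⊤)
    (g : EuclideanSpace ℝ (Fin d))
    (prox : EuclideanSpace ℝ (Fin d) → EuclideanSpace ℝ (Fin d))
    (hprox : ∀ z, IsMinOn (fun y => h y + ((‖y - z‖ ^ 2 / (2 * γ) : ℝ) : EReal)) Set.univ (prox z)) :
    (F (prox (x - γ • g)) : EReal) + h (prox (x - γ • g)) ≤
      (F x : EReal) + h x +
        ((γ / 2 * ‖g - gradient F x‖ ^ 2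
          + (L * γ ^ 2 / 2 - γ / 2) * ‖γ⁻¹ • (x - prox (x - γ • g))‖ ^ 2 : ℝ) : EReal) := by
  set y := prox (x - γ • g) with hy
  have hmin := hprox (x - γ • g)
  rw [← hy] at hmin
  obtain ⟨a, ha⟩ : ∃ a : ℝ, h x = a := ⟨_, (EReal.coe_toReal hx (hbot x)).symm⟩
  -- The prox objective is finite at `x`, hence at its minimizer.
  have hytop : h y ≠ ⊤ := by
    intro htop
    have h1 : h y + ((‖y - (x - γ • g)‖ ^ 2 / (2 * γ) : ℝ) : EReal) ≤
        h x + ((‖x - (x - γ • g)‖ ^ 2 / (2 * γ) : ℝ) : EReal) := hmin (Set.mem_univ x)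
    rw [htop, ha, EReal.top_add_coe, ← EReal.coe_add, top_le_iff] at h1
    exact EReal.coe_ne_top _ h1
  obtain ⟨b, hb⟩ : ∃ b : ℝ, h y = b := ⟨_, (EReal.coe_toReal hytop (hbot y)).symm⟩
  have hvar := prox_variational h hconv γ hγ x y _ hmin a b ha hb
  have hdes := descent F L hFdiff hFgrad x (y - x)
  rw [add_sub_cancel] at hdes
  rw [ha, hb]
  norm_cast
  rw [norm_smul, norm_inv, Real.norm_of_nonneg hγ.le, norm_sub_rev x y]
  -- Everything is expressed through `v = y - x`.
  generalize hv : y - x = v at *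
  have e1 : y - (x - γ • g) = v + γ • g := by rw [← hv]; abel
  have e2 : x - y = -v := by rw [← hv]; abel
  rw [e1, e2, inner_neg_right, inner_add_left, real_inner_smul_left,
    real_inner_self_eq_norm_sq] at hvar
  have e3 : -(‖v‖ ^ 2 + γ * ⟪g, v⟫) / γ = -(‖v‖ ^ 2 / γ) - ⟪g, v⟫ := by
    field_simp
    ring
  rw [e3] at hvar
  -- Young's inequality, as nonnegativity of `‖γ • (g - ∇F x) + v‖ ^ 2 / (2 * γ)`.
  have hyoung : 0 ≤ γ / 2 * ‖g - gradient F x‖ ^ 2 + (⟪g, v⟫ - ⟪gradient F x, v⟫)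
      + ‖v‖ ^ 2 / (2 * γ) := by
    have h0 : 0 ≤ ‖γ • (g - gradient F x) + v‖ ^ 2 / (2 * γ) := by positivity
    rw [norm_add_sq_real, norm_smul, real_inner_smul_left, inner_sub_left,
      Real.norm_of_nonneg hγ.le] at h0
    convert h0 using 1
    field_simp
  have e4 : (L * γ ^ 2 / 2 - γ / 2) * (γ⁻¹ * ‖v‖) ^ 2
      = L / 2 * ‖v‖ ^ 2 - ‖v‖ ^ 2 / γ + ‖v‖ ^ 2 / (2 * γ) := by
    field_simp
    ring
  rw [e4]
  linarith
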